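/- Fix integers i and m with m ≥ 1, and let S = [2i−2(m−1), 2i+2(m−1)]_4. Then F_{j,m}|_S = 0 for every j ∈ [2i−(m−1), 2i+(m−1)]_2. -/

import Mathlib

/-!
The elements of `P_m` in `Q_m` and those in `Q_{m+1}` differ in the parity of `r + s`, and each
cover joins one of the former to one of the latter. The proof is a sign-reversing involution on
order ideals which toggles a single element of `Q_{m+1}`, chosen in a way that depends only on the
part of the ideal in `Q_m`.

Write `j = 2i - (m-1) + 2l` with `0 ≤ l ≤ m-1`. Every element of `Q_{m+1}` on the diagonal
`s - r = 2l - (m-1)` has its label `3r + s + j` in `S`, so toggling it changes the sign of the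
specialized monomial (`diagonal_label_mem`). It remains to find, for every order ideal `I`, an
element on that diagonal that can be toggled (`exists_isFree`).

For this, encode `I ∩ Q_m` by the height function `H(r,s)`, the least `t` in the residue class of
the column over `(r,s)` that is not in `I` (`exists_height`). Heights at diagonally adjacent
positions differ by exactly `2` (`height_le`). For the `m` positions `(r,s)` on the chosen
diagonal, `H(r+1,s) - H(r,s+1)` runs from `+2` just before the first one to `-2` at the last one,
hence jumps from `+2` to `-2` at some position; there, all four neighbouring heights are determined
up to a common shift, and the element with `t = H(r+1,s) - 1` can be both added and removed. In
the language of alternating sign matrices, `I ∩ Q_m` is an `m × m` such matrix, the diagonal is one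
of its rows, and a row with sum `1` contains an entry `1`.
-/

open MvPolynomial
open scoped Classical

noncomputable section

/-- The set `Q_k`: triples `(r,s,t)` with `|r|+|s| ≤ k-2`, `r+s ≡ k (mod 2)`,
`t ≡ 2|s|-k+2 (mod 4)` and `2|s|-k+2 ≤ t ≤ k-2-2|r|`. -/
def pentagramQ (k : ℤ) : Set (ℤ × ℤ × ℤ) :=
  {p | |p.1| + |p.2.1| ≤ k - 2 ∧ (2 : ℤ) ∣ (p.1 + p.2.1 - k) ∧
    (4 : ℤ) ∣ (p.2.2 - (2 * |p.2.1| - k + 2)) ∧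
    2 * |p.2.1| - k + 2 ≤ p.2.2 ∧ p.2.2 ≤ k - 2 - 2 * |p.1|}

/-- The set `P_k = Q_k ∪ Q_{k+1}`. -/
def pentagramP (k : ℤ) : Set (ℤ × ℤ × ℤ) := pentagramQ k ∪ pentagramQ (k + 1)

/-- The covering relation: `(r',s',t')` covers `(r,s,t)` iff `t' = t + 1` and
`|r'-r| + |s'-s| = 1`. -/
def pentagramCovers (x y : ℤ × ℤ × ℤ) : Prop :=
  y.2.2 = x.2.2 + 1 ∧ |y.1 - x.1| + |y.2.1 - x.2.1| = 1

/-- The partial order on `P_k`: the reflexive-transitive closure of the covering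
relation within `P_k`. -/
def pentagramLe (k : ℤ) : (ℤ × ℤ × ℤ) → (ℤ × ℤ × ℤ) → Prop :=
  Relation.ReflTransGen
    (fun x y => x ∈ pentagramP k ∧ y ∈ pentagramP k ∧ pentagramCovers x y)

/-- An order ideal of `P_k`: a downward-closed subset of `P_k`. -/
def IsPentagramOrderIdeal (k : ℤ) (I : Set (ℤ × ℤ × ℤ)) : Prop :=
  I ⊆ pentagramP k ∧ ∀ x y, y ∈ I → pentagramLe k x y → x ∈ I

/-- `P_k` realized as a `Finset` (it is contained in the displayed finite box). -/
def pentagramPFinset (k : ℤ) : Finset (ℤ × ℤ × ℤ) :=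
  ((Finset.Icc (-(k-1)) (k-1)) ×ˢ (Finset.Icc (-(k-1)) (k-1)) ×ˢ
    (Finset.Icc (-(k-1)) (k-1))).filter (fun p => p ∈ pentagramP k)

/-- The F-polynomial `F_{j,k} = Σ_{order ideals I of P_k} Π_{(r,s,t) ∈ I} y_{3r+s+j}`,
as an element of `ℤ[y_i : i ∈ ℤ] = MvPolynomial ℤ ℤ`. -/
def pentagramF (j k : ℤ) : MvPolynomial ℤ ℤ :=
  ∑ I ∈ (pentagramPFinset k).powerset.filter
      (fun I : Finset (ℤ × ℤ × ℤ) => IsPentagramOrderIdeal k (↑I : Set (ℤ × ℤ × ℤ))),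
    ∏ p ∈ I, X (3 * p.1 + p.2.1 + j)

/-- The ring endomorphism of `ℤ[y_i : i ∈ ℤ]` sending `y_i ↦ -1` for `i ∈ S`
and fixing the other variables; `substNeg S F` is `F|_S`. -/
def substNeg (S : Set ℤ) : MvPolynomial ℤ ℤ →+* MvPolynomial ℤ ℤ :=
  (MvPolynomial.aeval
    (fun i : ℤ => if i ∈ S then (-1 : MvPolynomial ℤ ℤ) else X i)).toRingHom

/-- The arithmetic progression `[a,b]_d = {a, a+d, a+2d, …, b}` (as a subset of `ℤ`). -/
def AP (a b d : ℤ) : Set ℤ := {x | a ≤ x ∧ x ≤ b ∧ d ∣ (x - a)}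

/-! ### Order ideals and columns -/

/-- Being an order ideal can be tested on covering pairs. -/
lemma isIdeal_iff (k : ℤ) (I : Set (ℤ × ℤ × ℤ)) :
    IsPentagramOrderIdeal k I ↔ I ⊆ pentagramP k ∧
      ∀ x ∈ pentagramP k, ∀ y ∈ I, pentagramCovers x y → x ∈ I := by
  constructor
  · rintro ⟨h1, h2⟩
    exact ⟨h1, fun x hx y hy hc => h2 x y hy (Relation.ReflTransGen.single ⟨hx, h1 hy, hc⟩)⟩
  · rintro ⟨h1, h2⟩
    refine ⟨h1, fun x y hy hle => ?_⟩
    unfold pentagramLe at hle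
    induction hle using Relation.ReflTransGen.head_induction_on with
    | refl => exact hy
    | head h _ ih => exact h2 _ h.1 _ ih h.2.2

lemma mem_Q (k r s t : ℤ) : (r, s, t) ∈ pentagramQ k ↔
    max r (-r) + max s (-s) ≤ k - 2 ∧ (2 : ℤ) ∣ (r + s - k) ∧
    (4 : ℤ) ∣ (t - (2 * max s (-s) - k + 2)) ∧
    2 * max s (-s) - k + 2 ≤ t ∧ t ≤ k - 2 - 2 * max r (-r) := by
  simp only [pentagramQ, Set.mem_ofPred_eq, abs_eq_max_neg]

lemma covers_iff (r s t r' s' t' : ℤ) : pentagramCovers (r, s, t) (r', s', t') ↔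
    t' = t + 1 ∧ max (r' - r) (-(r' - r)) + max (s' - s) (-(s' - s)) = 1 := by
  simp only [pentagramCovers, abs_eq_max_neg]

lemma covers_cases {r s t r' s' t' : ℤ} (h : pentagramCovers (r, s, t) (r', s', t')) :
    t' = t + 1 ∧ (r' = r + 1 ∧ s' = s ∨ r' = r - 1 ∧ s' = s ∨
      r' = r ∧ s' = s + 1 ∨ r' = r ∧ s' = s - 1) := by
  rw [covers_iff] at h
  omega

/-- Going down two steps, through an element of `Q_{m+1}`, to a diagonally adjacent column. -/
lemma ideal_step {m : ℤ} {I : Set (ℤ × ℤ × ℤ)} (hI : IsPentagramOrderIdeal m I)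
    {r s t r' s' : ℤ} (hr : r' = r + 1 ∨ r' = r - 1) (hs : s' = s + 1 ∨ s' = s - 1)
    (h : (r, s, t) ∈ I) (hQ : (r, s, t) ∈ pentagramQ m) (hQ' : (r', s', t - 2) ∈ pentagramQ m) :
    (r', s', t - 2) ∈ I := by
  rw [isIdeal_iff] at hI
  have hmid : (r', s, t - 1) ∈ pentagramQ (m + 1) := by
    rw [mem_Q] at *
    omega
  have h1 : (r', s, t - 1) ∈ I := by
    refine hI.2 _ (Or.inr hmid) _ h ?_
    rw [covers_iff]
    omega
  refine hI.2 _ (Or.inl hQ') _ h1 ?_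
  rw [covers_iff]
  omega

lemma ideal_step_four {m : ℤ} {I : Set (ℤ × ℤ × ℤ)} (hI : IsPentagramOrderIdeal m I)
    {r s t : ℤ} (h : (r, s, t) ∈ I) (hQ : (r, s, t) ∈ pentagramQ m)
    (hQfour : (r, s, t - 4) ∈ pentagramQ m) : (r, s, t - 4) ∈ I := by
  have hmid : (r + 1, s + 1, t - 2) ∈ pentagramQ m := by
    rw [mem_Q] at *
    omega
  have h1 := ideal_step hI (Or.inl rfl) (Or.inl rfl) h hQ hmid
  have e : t - 4 = t - 2 - 2 := by ring
  rw [e] at hQfour ⊢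
  exact ideal_step hI (Or.inr (by ring)) (Or.inr (by ring)) h1 hmid hQfour

/-! ### Heights of the columns of `Q_m` -/

/-- `h` is the height of the column of `I ∩ Q_m` over `(r,s)`: the least `t` in the residue class
of that column with `(r,s,t) ∉ I`. Positions with `|r| + |s| = m` carry an empty column, whose
height is then `2|s| - m + 2`. -/
def IsHeight (m : ℤ) (I : Set (ℤ × ℤ × ℤ)) (r s h : ℤ) : Prop :=
  (4 : ℤ) ∣ h - (2 * max s (-s) - m + 2) ∧ 2 * max s (-s) - m + 2 ≤ h ∧
    h ≤ m + 2 - 2 * max r (-r) ∧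
    ∀ t, (r, s, t) ∈ pentagramQ m → ((r, s, t) ∈ I ↔ t < h)

lemma exists_height {m : ℤ} {I : Set (ℤ × ℤ × ℤ)} (hI : IsPentagramOrderIdeal m I)
    {r s : ℤ} (hrs : max r (-r) + max s (-s) ≤ m) (hpar : (2 : ℤ) ∣ (r + s - m)) :
    ∃ h, IsHeight m I r s h := by
  obtain ⟨N, hN⟩ : ∃ N : ℕ, m + 2 - 2 * max r (-r) = 2 * max s (-s) - m + 2 + 4 * (N : ℤ) :=
    ⟨((2 * m - 2 * max r (-r) - 2 * max s (-s)) / 4).toNat, by omega⟩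
  set low := 2 * max s (-s) - m + 2 with hlow
  have hNn : (r, s, low + 4 * (N : ℤ)) ∉ I := by
    intro h
    rcases hI.1 h with h | h <;> rw [mem_Q] at h <;> omega
  have hex : ∃ n : ℕ, (r, s, low + 4 * (n : ℤ)) ∉ I := ⟨N, hNn⟩
  have hle := Nat.find_le (h := hex) hNn
  refine ⟨low + 4 * (Nat.find hex : ℤ), by omega, by omega, by omega, fun t ht => ?_⟩
  have ht' := ht
  rw [mem_Q] at ht'
  obtain ⟨n, hn⟩ : ∃ n : ℕ, t = low + 4 * (n : ℤ) := ⟨((t - low) / 4).toNat, by omega⟩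
  constructor
  · intro htI
    by_contra hlt
    -- descend from `t` by steps of four to the first missing element
    have key : ∀ d : ℕ, Nat.find hex + d ≤ n → (r, s, t - 4 * (d : ℤ)) ∈ I := by
      intro d
      induction d with
      | zero => intro _; simpa using htI
      | succ d ih =>
        intro hd
        have h1 := ih (by omega)
        have e : t - 4 * ((d + 1 : ℕ) : ℤ) = t - 4 * (d : ℤ) - 4 := by push_cast; ring
        rw [e]
        refine ideal_step_four hI h1 ?_ ?_ <;> rw [mem_Q] <;> omega
    have h1 := key (n - Nat.find hex) (by omega)
    have e : t - 4 * ((n - Nat.find hex : ℕ) : ℤ) = low + 4 * (Nat.find hex : ℤ) := by omega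
    rw [e] at h1
    exact Nat.find_spec hex h1
  · intro hlt
    have := Nat.find_min hex (m := n) (by omega)
    rw [hn]
    exact not_not.mp this

set_option maxHeartbeats 2000000 in
/-- Together with the residue class condition modulo `4`, applying this in both directions shows
that heights at diagonally adjacent positions differ by exactly `2`. -/
lemma height_le {m : ℤ} {I : Set (ℤ × ℤ × ℤ)} (hI : IsPentagramOrderIdeal m I)
    {r s h r' s' h' : ℤ} (hr : r' = r + 1 ∨ r' = r - 1) (hs : s' = s + 1 ∨ s' = s - 1)
    (hpar : (2 : ℤ) ∣ (r + s - m))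
    (H : IsHeight m I r s h) (H' : IsHeight m I r' s' h') : h ≤ h' + 2 := by
  obtain ⟨a1, a2, a3, a4⟩ := H
  obtain ⟨b1, b2, b3, b4⟩ := H'
  by_contra hcon
  have hQ : (r, s, h - 4) ∈ pentagramQ m := by
    rw [mem_Q]
    omega
  have hin : (r, s, h - 4) ∈ I := (a4 _ hQ).2 (by omega)
  have hQ' : (r', s', h - 4 - 2) ∈ pentagramQ m := by
    rw [mem_Q]
    omega
  have := (b4 _ hQ').1 (ideal_step hI hr hs hin hQ hQ')
  omega

/-! ### Free elements -/

/-- `x` is an element of `Q_{m+1}` on the diagonal `s - r = 2l - (m-1)` such that membership of `x`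
in the order ideal `I` is not constrained by the other elements of `I`. -/
def IsFree (m l : ℤ) (I : Set (ℤ × ℤ × ℤ)) (x : ℤ × ℤ × ℤ) : Prop :=
  x ∈ pentagramQ (m + 1) ∧ x.2.1 - x.1 = 2 * l - (m - 1) ∧
    (∀ y ∈ pentagramP m, pentagramCovers y x → y ∈ I) ∧
    (∀ z ∈ pentagramP m, pentagramCovers x z → z ∉ I)

/-- The local configuration of heights that corresponds to an entry `1` of the alternating sign
matrix. -/
lemma isFree_of_heights {m l r s a : ℤ} {I : Set (ℤ × ℤ × ℤ)}
    (hrs : max r (-r) + max s (-s) ≤ m - 1) (hpar : (2 : ℤ) ∣ r + s - (m + 1))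
    (hd : s - r = 2 * l - (m - 1))
    (hr1 : IsHeight m I (r + 1) s a) (hr2 : IsHeight m I (r - 1) s a)
    (hs1 : IsHeight m I r (s - 1) (a + 2)) (hs2 : IsHeight m I r (s + 1) (a + 2)) :
    IsFree m l I (r, s, a - 1) := by
  obtain ⟨a1, a2, a3, a4⟩ := hr1
  obtain ⟨-, -, b3, b4⟩ := hr2
  obtain ⟨-, -, -, p4⟩ := hs1
  obtain ⟨-, -, -, q4⟩ := hs2
  have hx : (r, s, a - 1) ∈ pentagramQ (m + 1) := by
    rw [mem_Q]
    omega
  refine ⟨hx, hd, ?_, ?_⟩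
  · rintro ⟨r', s', t'⟩ hy hc
    obtain ⟨ht, hcase⟩ := covers_cases hc
    obtain rfl : t' = a - 2 := by omega
    rcases hy with hy | hy
    · -- the neighbours in the `r` direction are excluded by their residue modulo `4`
      rcases hcase with ⟨h1, rfl⟩ | ⟨h1, rfl⟩ | ⟨rfl, h1⟩ | ⟨rfl, h1⟩
      · rw [mem_Q] at hy; omega
      · rw [mem_Q] at hy; omega
      · obtain rfl : s' = s - 1 := by omega
        exact (p4 _ hy).2 (by omega)
      · obtain rfl : s' = s + 1 := by omega
        exact (q4 _ hy).2 (by omega)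
    · have hpar' := ((mem_Q _ _ _ _).1 hy).2.1
      omega
  · rintro ⟨r', s', t'⟩ hy hc
    obtain ⟨ht, hcase⟩ := covers_cases hc
    obtain rfl : t' = a := by omega
    rcases hy with hy | hy
    · -- the neighbours in the `s` direction are excluded by their residue modulo `4`
      rcases hcase with ⟨rfl, rfl⟩ | ⟨rfl, rfl⟩ | ⟨rfl, h1⟩ | ⟨rfl, h1⟩
      · exact fun h => absurd ((a4 _ hy).1 h) (by omega)
      · exact fun h => absurd ((b4 _ hy).1 h) (by omega)
      · rw [mem_Q] at hy; omega
      · rw [mem_Q] at hy; omega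
    · have hpar' := ((mem_Q _ _ _ _).1 hy).2.1
      omega

/-- A `±2`-valued sequence going from `2` to `-2` jumps somewhere. -/
lemma exists_jump (D : ℕ → ℤ) (n : ℕ) (h0 : D 0 = 2) (hn : D n = -2)
    (hD : ∀ v ≤ n, D v = 2 ∨ D v = -2) : ∃ v < n, D v = 2 ∧ D (v + 1) = -2 := by
  by_contra hcon
  push Not at hcon
  have : ∀ v ≤ n, D v = 2 := by
    intro v
    induction v with
    | zero => intro _; exact h0
    | succ v ih =>
      intro hv
      exact (hD _ hv).resolve_right (hcon v (by omega) (ih (by omega)))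
  have := this n le_rfl
  omega

set_option maxHeartbeats 2000000 in
lemma exists_isFree {m l : ℤ} (hm : 1 ≤ m) (hl0 : 0 ≤ l) (hl : l ≤ m - 1)
    {I : Set (ℤ × ℤ × ℤ)} (hI : IsPentagramOrderIdeal m I) : ∃ x, IsFree m l I x := by
  have hex : ∀ r s : ℤ, ∃ h, max r (-r) + max s (-s) ≤ m → (2 : ℤ) ∣ (r + s - m) →
      IsHeight m I r s h := by
    intro r s
    by_cases h1 : max r (-r) + max s (-s) ≤ m
    · by_cases h2 : (2 : ℤ) ∣ (r + s - m)
      · obtain ⟨h, hh⟩ := exists_height hI h1 h2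
        exact ⟨h, fun _ _ => hh⟩
      · exact ⟨0, fun _ h => absurd h h2⟩
    · exact ⟨0, fun h => absurd h h1⟩
  choose H hH using hex
  -- `v` ranges over `0, …, m`, so that the diagonal positions are `(v - l, v + l - (m-1))` with
  -- `0 ≤ v < m`, and `D v` compares the two heights between positions `v - 1` and `v`.
  set D : ℕ → ℤ := fun v => H (v - l) (v + l - m) - H (v - l - 1) (v + l - m + 1) with hDdef
  obtain ⟨n, hn⟩ : ∃ n : ℕ, m = n := ⟨m.toNat, by omega⟩
  have hA : ∀ v : ℕ, v ≤ n → IsHeight m I (v - l) (v + l - m) (H (v - l) (v + l - m)) :=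
    fun v hv => hH _ _ (by omega) (by omega)
  have hB : ∀ v : ℕ, v ≤ n →
      IsHeight m I (v - l - 1) (v + l - m + 1) (H (v - l - 1) (v + l - m + 1)) :=
    fun v hv => hH _ _ (by omega) (by omega)
  have hD : ∀ v ≤ n, D v = 2 ∨ D v = -2 := by
    intro v hv
    have h1 := height_le hI (by omega) (by omega) (by omega) (hA v hv) (hB v hv)
    have h2 := height_le hI (by omega) (by omega) (by omega) (hB v hv) (hA v hv)
    have h3 := (hA v hv).1
    have h4 := (hB v hv).1
    simp only [hDdef]
    omega
  obtain ⟨v, hv, hv1, hv2⟩ := exists_jump D n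
    (by
      obtain ⟨a1, a2, a3, -⟩ := hA 0 (by omega)
      obtain ⟨b1, b2, b3, -⟩ := hB 0 (by omega)
      simp only [hDdef]
      omega)
    (by
      obtain ⟨a1, a2, a3, -⟩ := hA n (by omega)
      obtain ⟨b1, b2, b3, -⟩ := hB n (by omega)
      simp only [hDdef]
      omega) hD
  simp only [hDdef] at hv1 hv2
  have A0 := hA v (by omega)
  have B0 := hB v (by omega)
  have A1 := hA (v + 1) (by omega)
  have B1 := hB (v + 1) (by omega)
  obtain ⟨r, hr⟩ : ∃ r : ℤ, r = v - l := ⟨_, rfl⟩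
  obtain ⟨s, hs⟩ : ∃ s : ℤ, s = v + l - m + 1 := ⟨_, rfl⟩
  have e1 : (v : ℤ) - l = r := by omega
  have e2 : (v : ℤ) + l - m = s - 1 := by omega
  have e3 : ((v + 1 : ℕ) : ℤ) - l = r + 1 := by push_cast; omega
  have e4 : ((v + 1 : ℕ) : ℤ) + l - m = s := by push_cast; omega
  have e5 : s - 1 + 1 = s := by ring
  have e6 : r + 1 - 1 = r := by ring
  rw [e1, e2] at A0
  rw [e1, e2, e5] at B0
  rw [e3, e4] at A1
  rw [e3, e4, e6] at B1
  rw [e1, e2, e5] at hv1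
  rw [e3, e4, e6] at hv2
  have i1 := height_le hI (by omega) (by omega) (by omega) A1 A0
  have i2 := height_le hI (by omega) (by omega) (by omega) A0 A1
  have i3 := height_le hI (by omega) (by omega) (by omega) B1 B0
  have i4 := height_le hI (by omega) (by omega) (by omega) B0 B1
  have hab : H (r + 1) s = H (r - 1) s := by
    have h1 := A1.1
    have h2 := B0.1
    omega
  refine ⟨_, isFree_of_heights (by omega) (by omega) ?_ A1 (hab ▸ B0) ?_ ?_⟩
  · omega
  · have e : H (r + 1) s + 2 = H r (s - 1) := by omega
    rwa [e]
  · have e : H (r + 1) s + 2 = H r (s + 1) := by omega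
    rwa [e]

/-! ### The involution -/

/-- Adds `x` to `I` if absent, and removes it if present. -/
def toggle (I : Finset (ℤ × ℤ × ℤ)) (x : ℤ × ℤ × ℤ) : Finset (ℤ × ℤ × ℤ) :=
  if x ∈ I then I.erase x else insert x I

lemma mem_toggle_of_ne {I : Finset (ℤ × ℤ × ℤ)} {x y : ℤ × ℤ × ℤ} (h : y ≠ x) :
    y ∈ toggle I x ↔ y ∈ I := by
  unfold toggle
  split_ifs <;> simp [h]

lemma toggle_toggle (I : Finset (ℤ × ℤ × ℤ)) (x : ℤ × ℤ × ℤ) : toggle (toggle I x) x = I := by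
  unfold toggle
  by_cases h : x ∈ I <;> simp [h]

lemma toggle_ne (I : Finset (ℤ × ℤ × ℤ)) (x : ℤ × ℤ × ℤ) : toggle I x ≠ I := by
  intro h
  have hiff : x ∈ toggle I x ↔ x ∈ I := by rw [h]
  unfold toggle at hiff
  by_cases hx : x ∈ I <;> simp [hx] at hiff

/-- Covers change the parity of `r + s`, so they never join two elements of `Q_{m+1}`. -/
lemma not_covers_Q {k : ℤ} {x y : ℤ × ℤ × ℤ} (hx : x ∈ pentagramQ k) (hy : y ∈ pentagramQ k) :
    ¬ pentagramCovers x y := by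
  obtain ⟨r, s, t⟩ := x
  obtain ⟨r', s', t'⟩ := y
  rw [mem_Q] at hx hy
  rw [covers_iff]
  omega

/-- Whether an element is free depends only on `I ∩ Q_m`. -/
lemma isFree_toggle {m l : ℤ} {I : Finset (ℤ × ℤ × ℤ)} {x : ℤ × ℤ × ℤ}
    (hx : x ∈ pentagramQ (m + 1)) :
    IsFree m l (toggle I x : Finset (ℤ × ℤ × ℤ)) = IsFree m l (I : Set (ℤ × ℤ × ℤ)) := by
  funext w
  apply propext
  unfold IsFree
  refine and_congr_right fun hw => and_congr_right fun _ => and_congr ?_ ?_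
  · refine forall_congr' fun y => forall_congr' fun _ => forall_congr' fun hc => ?_
    have hne : y ≠ x := by rintro rfl; exact not_covers_Q hx hw hc
    simp only [Finset.mem_coe, mem_toggle_of_ne hne]
  · refine forall_congr' fun y => forall_congr' fun _ => forall_congr' fun hc => ?_
    have hne : y ≠ x := by rintro rfl; exact not_covers_Q hw hx hc
    simp only [Finset.mem_coe, mem_toggle_of_ne hne]

lemma isIdeal_toggle {m l : ℤ} {I : Finset (ℤ × ℤ × ℤ)} {x : ℤ × ℤ × ℤ}
    (hI : IsPentagramOrderIdeal m (I : Set (ℤ × ℤ × ℤ))) (hx : IsFree m l I x) :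
    IsPentagramOrderIdeal m (toggle I x : Finset (ℤ × ℤ × ℤ)) := by
  rw [isIdeal_iff] at hI ⊢
  obtain ⟨hI1, hI2⟩ := hI
  obtain ⟨hxQ, -, hdn, hup⟩ := hx
  constructor
  · intro y hy
    by_cases hyx : y = x
    · rw [hyx]; exact Or.inr hxQ
    · exact hI1 ((mem_toggle_of_ne hyx).1 hy)
  · intro y hyP z hz hc
    by_cases hyx : y = x
    · subst hyx
      have hne : z ≠ y := by rintro rfl; exact not_covers_Q hxQ hxQ hc
      have hzI : z ∈ I := (mem_toggle_of_ne hne).1 hz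
      exact absurd hzI (hup z (hI1 hzI) hc)
    · refine (mem_toggle_of_ne hyx).2 ?_
      by_cases hzx : z = x
      · subst hzx
        exact hdn y hyP hc
      · exact hI2 y hyP z ((mem_toggle_of_ne hzx).1 hz) hc

lemma mem_PFinset {m : ℤ} {x : ℤ × ℤ × ℤ} : x ∈ pentagramPFinset m ↔ x ∈ pentagramP m := by
  obtain ⟨r, s, t⟩ := x
  simp only [pentagramPFinset, Finset.mem_filter, Finset.mem_product, Finset.mem_Icc,
    and_iff_right_iff_imp]
  rintro (h | h) <;> rw [mem_Q] at h <;> omega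

lemma prod_toggle {R : Type*} [CommRing R] (f : ℤ × ℤ × ℤ → R) {I : Finset (ℤ × ℤ × ℤ)}
    {x : ℤ × ℤ × ℤ} (hx : f x = -1) : ∏ p ∈ I, f p + ∏ p ∈ toggle I x, f p = 0 := by
  unfold toggle
  split_ifs with h
  · rw [← Finset.mul_prod_erase I f h, hx]; ring
  · rw [Finset.prod_insert h, hx]; ring

lemma diagonal_label_mem {i m l : ℤ} {x : ℤ × ℤ × ℤ} (hx : x ∈ pentagramQ (m + 1))
    (hd : x.2.1 - x.1 = 2 * l - (m - 1)) :
    3 * x.1 + x.2.1 + (2 * i - (m - 1) + 2 * l) ∈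
      AP (2 * i - 2 * (m - 1)) (2 * i + 2 * (m - 1)) 4 := by
  obtain ⟨r, s, t⟩ := x
  rw [mem_Q] at hx
  simp only [AP, Set.mem_ofPred_eq] at *
  omega

theorem stmt9 (i m : ℤ) (hm : 1 ≤ m) :
    ∀ j ∈ AP (2 * i - (m - 1)) (2 * i + (m - 1)) 2,
      substNeg (AP (2 * i - 2 * (m - 1)) (2 * i + 2 * (m - 1)) 4) (pentagramF j m) = 0 := by
  intro j hj
  obtain ⟨l, hjl, hl0, hl⟩ : ∃ l, j = 2 * i - (m - 1) + 2 * l ∧ 0 ≤ l ∧ l ≤ m - 1 := by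
    simp only [AP, Set.mem_ofPred_eq] at hj
    exact ⟨(j - (2 * i - (m - 1))) / 2, by omega, by omega, by omega⟩
  set S := AP (2 * i - 2 * (m - 1)) (2 * i + 2 * (m - 1)) 4 with hS
  let f : ℤ × ℤ × ℤ → MvPolynomial ℤ ℤ := fun p => substNeg S (X (3 * p.1 + p.2.1 + j))
  -- The element to toggle is chosen as a function of the predicate `IsFree m l I`, which toggling
  -- leaves unchanged; this makes the toggling an involution.
  let c : Finset (ℤ × ℤ × ℤ) → ℤ × ℤ × ℤ :=
    fun I => Classical.epsilon (IsFree m l (I : Set (ℤ × ℤ × ℤ)))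
  have hc : ∀ I : Finset (ℤ × ℤ × ℤ), IsPentagramOrderIdeal m (I : Set (ℤ × ℤ × ℤ)) →
      IsFree m l I (c I) :=
    fun I hI => Classical.epsilon_spec (exists_isFree hm hl0 hl hI)
  have hf : ∀ I : Finset (ℤ × ℤ × ℤ), IsPentagramOrderIdeal m (I : Set (ℤ × ℤ × ℤ)) →
      f (c I) = -1 := by
    intro I hI
    have h := diagonal_label_mem (i := i) (hc I hI).1 (hc I hI).2.1
    rw [← hjl, ← hS] at h
    simp only [f, substNeg, AlgHom.toRingHom_eq_coe, RingHom.coe_coe, aeval_X, if_pos h]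
  unfold pentagramF
  simp only [map_sum, map_prod]
  refine Finset.sum_involution (fun I _ => toggle I (c I)) ?_ ?_ ?_ ?_
  · intro I hI
    exact prod_toggle f (hf I (Finset.mem_filter.1 hI).2)
  · intro I _ _
    exact toggle_ne _ _
  · intro I hI
    have h := isIdeal_toggle (Finset.mem_filter.1 hI).2 (hc I (Finset.mem_filter.1 hI).2)
    refine Finset.mem_filter.2 ⟨Finset.mem_powerset.2 fun p hp => ?_, h⟩
    exact mem_PFinset.2 (h.1 hp)
  · intro I hI
    have h : c (toggle I (c I)) = c I := by
      change Classical.epsilon _ = Classical.epsilon _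
      rw [isFree_toggle (hc I (Finset.mem_filter.1 hI).2).1]
    simp only [h, toggle_toggle]

end
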